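/- Let T, the constants, and a gadget system satisfying (G1)–(G9) be as in the context, and let A₂ ⊆ A₁ be a subset of size σ₂kt such that for every α ∈ A₂ and every s ∈ S(α), the vertex s has at least τ₂kt out-neighbours and at least τ₂kt in-neighbours that are available for α with respect to A₂. Then there is a subset A₃ ⊆ A₂ and a partition {B₁, …, B_{σ₃t}} of A₃ such that: (i) |B_i| = 10k for every i ∈ [σ₃t]; (ii) for every i ∈ [σ₃t], every α ∈ B_i and every u ∈ S(α), the vertex u has at least τ₃kt out-neighbours and at least τ₃kt in-neighbours that are eligible for B_i in W(A₃ ∖ B_i) ∖ X(α); (iii) for every i ∈ [σ₃t], there are at least n/10 vertices in V_good ∩ W(A₃) that are eligible for B_i in W(A₃). -/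

import Mathlib

open Finset

namespace TournamentPartition

/-! ### Basic constants from the paper -/

def rho : ℕ := 10 ^ 4
def sigma1 : ℕ := 10 ^ 60
def sigma2 : ℕ := 10 ^ 4
def sigma3 : ℕ := 10

/-- `s` contains at least `m` elements satisfying `P`. -/
def ManyIn {α : Type*} (s : Finset α) (m : ℝ) (P : α → Prop) : Prop :=
  ∃ s' : Finset α, s' ⊆ s ∧ m ≤ (s'.card : ℝ) ∧ ∀ x ∈ s', P x

section Defs

variable {V I : Type*}

/-- `E u v` means that the edge between `u` and `v` is directed from `u` to `v`. -/
def IsTournament (E : V → V → Prop) : Prop :=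
  (∀ v, ¬ E v v) ∧ ∀ u v : V, u ≠ v → (E u v ↔ ¬ E v u)

/-- There is a directed path from `u` to `v` all of whose vertices lie in `S`. -/
def ReachWithin (E : V → V → Prop) (S : Set V) (u v : V) : Prop :=
  Relation.ReflTransGen (fun a b => a ∈ S ∧ b ∈ S ∧ E a b) u v

def StronglyConnectedOn (E : V → V → Prop) (S : Set V) : Prop :=
  ∀ u ∈ S, ∀ v ∈ S, ReachWithin E S u v

/-- A directed path, as a list of distinct vertices with consecutive edges. -/
def IsDiPath (E : V → V → Prop) (l : List V) : Prop :=
  l ≠ [] ∧ l.Nodup ∧ l.Chain' E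

variable [Fintype V] [DecidableEq V]

/-- The set `S` induces a strongly `k`-connected subtournament. -/
def StronglyKConnectedOn (E : V → V → Prop) (k : ℕ) (S : Finset V) : Prop :=
  k + 1 ≤ S.card ∧
    ∀ Z : Finset V, Z.card ≤ k → StronglyConnectedOn E ((S \ Z : Finset V) : Set V)

def StronglyKConnected (E : V → V → Prop) (k : ℕ) : Prop :=
  StronglyKConnectedOn E k Finset.univ

def outN (E : V → V → Prop) [DecidableRel E] (u : V) : Finset V :=
  Finset.univ.filter fun v => E u v

def inN (E : V → V → Prop) [DecidableRel E] (u : V) : Finset V :=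
  Finset.univ.filter fun v => E v u

/-- A system of gadgets `U(α)` with special sets `S⁺(α), S⁻(α) ⊆ S(α) ⊆ U(α)`,
exceptional sets `X(α)` and special vertices `s⁺(α), s⁻(α) ∈ S(α)`. -/
structure GadgetSystem (V I : Type*) where
  U : I → Finset V
  S : I → Finset V
  Sp : I → Finset V
  Sm : I → Finset V
  X : I → Finset V
  sp : I → V
  sm : I → V
  sp_mem : ∀ α, sp α ∈ S α
  sm_mem : ∀ α, sm α ∈ S α
  Sp_subset : ∀ α, Sp α ⊆ S α
  Sm_subset : ∀ α, Sm α ⊆ S α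
  S_subset : ∀ α, S α ⊆ U α

variable [Fintype I] [DecidableEq I]

def Vokay (G : GadgetSystem V I) : Finset V :=
  Finset.univ \ Finset.univ.biUnion G.S

/-- Vertices of `V_okay` having no out-neighbour in `S⁻(α)` for at least `k*t` indices `α`. -/
def VbadP (E : V → V → Prop) [DecidableRel E] (G : GadgetSystem V I) (k t : ℕ) : Finset V :=
  (Vokay G).filter fun u =>
    k * t ≤ (Finset.univ.filter fun α : I => ∀ v ∈ G.Sm α, ¬ E u v).card

/-- Vertices of `V_okay` having no in-neighbour in `S⁺(α)` for at least `k*t` indices `α`. -/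
def VbadM (E : V → V → Prop) [DecidableRel E] (G : GadgetSystem V I) (k t : ℕ) : Finset V :=
  (Vokay G).filter fun u =>
    k * t ≤ (Finset.univ.filter fun α : I => ∀ v ∈ G.Sp α, ¬ E v u).card

def Vbad (E : V → V → Prop) [DecidableRel E] (G : GadgetSystem V I) (k t : ℕ) : Finset V :=
  VbadP E G k t ∩ VbadM E G k t

def VgoodP (E : V → V → Prop) [DecidableRel E] (G : GadgetSystem V I) (k t : ℕ) : Finset V :=
  Vokay G \ VbadP E G k t

def VgoodM (E : V → V → Prop) [DecidableRel E] (G : GadgetSystem V I) (k t : ℕ) : Finset V :=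
  Vokay G \ VbadM E G k t

def Vgood (E : V → V → Prop) [DecidableRel E] (G : GadgetSystem V I) (k t : ℕ) : Finset V :=
  VgoodP E G k t ∩ VgoodM E G k t

/-- `W(C) = V ∖ ⋃_{α ∈ C} U(α)`. -/
def Wof (G : GadgetSystem V I) (C : Finset I) : Finset V :=
  Finset.univ \ C.biUnion G.U

def NokayP (E : V → V → Prop) [DecidableRel E] (G : GadgetSystem V I) (u : V) : Finset V :=
  outN E u ∩ Vokay G

def NokayM (E : V → V → Prop) [DecidableRel E] (G : GadgetSystem V I) (u : V) : Finset V :=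
  inN E u ∩ Vokay G

def NgoodP (E : V → V → Prop) [DecidableRel E] (G : GadgetSystem V I) (k t : ℕ) (u : V) :
    Finset V :=
  outN E u ∩ VgoodP E G k t

def NgoodM (E : V → V → Prop) [DecidableRel E] (G : GadgetSystem V I) (k t : ℕ) (u : V) :
    Finset V :=
  inN E u ∩ Vgood E G k t

/-! ### Properties (G1)–(G9) -/

def CondG1 (G : GadgetSystem V I) : Prop :=
  ∀ α β : I, α ≠ β → Disjoint (G.U α) (G.U β)

def CondG2 (G : GadgetSystem V I) (k t : ℕ) : Prop :=
  ∀ α : I, (G.S α).card ≤ rho ∧ (G.X α).card ≤ rho * sigma1 * k * t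

def CondG3 (E : V → V → Prop) (G : GadgetSystem V I) : Prop :=
  ∀ α : I, ∀ u ∈ G.Sm α, ∀ v ∈ G.Sp α, ReachWithin E (G.U α : Set V) u v

def CondG4 (E : V → V → Prop) (G : GadgetSystem V I) : Prop :=
  ∀ α : I, ∀ x : V, x ∉ G.X α →
    (E x (G.sp α) → ∀ u ∈ G.U α \ G.S α, E x u) ∧
    (E (G.sm α) x → ∀ u ∈ G.U α \ G.S α, E u x)

def CondG5 (E : V → V → Prop) [DecidableRel E] (G : GadgetSystem V I) (k t : ℕ) : Prop :=
  ∀ u ∈ Vokay G,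
    10 ^ 12 * (VbadP E G k t).card ≤ (outN E u).card ∧
    10 ^ 12 * (VbadM E G k t).card ≤ (inN E u).card

/-- Properties (G1)–(G5) of a gadget system. -/
def GadgetHyp (E : V → V → Prop) [DecidableRel E] (G : GadgetSystem V I) (k t : ℕ) : Prop :=
  CondG1 G ∧ CondG2 G k t ∧ CondG3 E G ∧ CondG4 E G ∧ CondG5 E G k t

def CondG6 (E : V → V → Prop) [DecidableRel E] (G : GadgetSystem V I) (k t : ℕ) : Prop :=
  (Fintype.card V : ℝ) / 2 ≤ ((Vgood E G k t).card : ℝ)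

def CondG7 (E : V → V → Prop) [DecidableRel E] (G : GadgetSystem V I) (k t τ₁ : ℕ) : Prop :=
  ∀ u ∈ Vokay G,
    max ((10 : ℝ) ^ 11 * ((VbadP E G k t).card : ℝ)) (((τ₁ * k * t : ℕ) : ℝ) / 2)
      ≤ ((outN E u ∩ VgoodP E G k t).card : ℝ)

def CondG8 (E : V → V → Prop) [DecidableRel E] (G : GadgetSystem V I) (k t τ₁ : ℕ) : Prop :=
  ∀ u ∈ Vokay G,
    max ((10 : ℝ) ^ 11 * ((VbadM E G k t).card : ℝ)) (((τ₁ * k * t : ℕ) : ℝ) / 2)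
      ≤ ((inN E u ∩ Vgood E G k t).card : ℝ)

def CondG9 (E : V → V → Prop) [DecidableRel E] (G : GadgetSystem V I) (k t τ₁ : ℕ) : Prop :=
  ∀ u : V,
    max ((10 : ℝ) ^ 11 * (((Finset.univ \ Vokay G).card : ℕ) : ℝ)) (((τ₁ * k * t : ℕ) : ℝ) / 2)
      ≤ ((outN E u ∩ Vokay G).card : ℝ) ∧
    max ((10 : ℝ) ^ 11 * (((Finset.univ \ Vokay G).card : ℕ) : ℝ)) (((τ₁ * k * t : ℕ) : ℝ) / 2)
      ≤ ((inN E u ∩ Vokay G).card : ℝ)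

/-- Properties (G6)–(G9) of a gadget system. -/
def GadgetHyp2 (E : V → V → Prop) [DecidableRel E] (G : GadgetSystem V I) (k t τ₁ : ℕ) :
    Prop :=
  CondG6 E G k t ∧ CondG7 E G k t τ₁ ∧ CondG8 E G k t τ₁ ∧ CondG9 E G k t τ₁

/-! ### Available vertices -/

def AvailA1 (E : V → V → Prop) [DecidableRel E] (G : GadgetSystem V I) (k t : ℕ)
    (W : Finset V) (u : V) : Prop :=
  u ∈ Vgood E G k t ∩ W

def AvailA2 (E : V → V → Prop) [DecidableRel E] (G : GadgetSystem V I) (k t τ₂ : ℕ)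
    (W : Finset V) (u : V) : Prop :=
  u ∈ (VgoodP E G k t \ VgoodM E G k t) ∩ W ∧
    ManyIn (inN E u) ((τ₂ * k * t : ℕ) : ℝ) (AvailA1 E G k t W)

def AvailA3 (E : V → V → Prop) [DecidableRel E] (G : GadgetSystem V I) (k t τ₂ : ℕ)
    (W : Finset V) (u : V) : Prop :=
  u ∈ (VgoodM E G k t \ VgoodP E G k t) ∩ W ∧
    ManyIn (outN E u) ((τ₂ * k * t : ℕ) : ℝ)
      (fun v => AvailA1 E G k t W v ∨ AvailA2 E G k t τ₂ W v)

def AvailA4 (E : V → V → Prop) [DecidableRel E] (G : GadgetSystem V I) (k t τ₂ : ℕ)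
    (W : Finset V) (u : V) : Prop :=
  u ∈ Vbad E G k t ∩ W ∧
    ManyIn (outN E u) ((τ₂ * k * t : ℕ) : ℝ)
      (fun v => AvailA1 E G k t W v ∨ AvailA2 E G k t τ₂ W v) ∧
    ManyIn (inN E u) ((τ₂ * k * t : ℕ) : ℝ) (AvailA1 E G k t W)

/-- `u` is available (for `α`) with respect to a family `𝒜`, where `W = W(𝒜 ∖ {α})`. -/
def Available (E : V → V → Prop) [DecidableRel E] (G : GadgetSystem V I) (k t τ₂ : ℕ)
    (W : Finset V) (u : V) : Prop :=
  AvailA1 E G k t W u ∨ AvailA2 E G k t τ₂ W u ∨ AvailA3 E G k t τ₂ W u ∨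
    AvailA4 E G k t τ₂ W u

/-! ### Eligible and helpful vertices -/

/-- Indices `α ∈ 𝒜` such that `u` has no out-neighbour in `S⁻(α)`. -/
def MissOut (E : V → V → Prop) [DecidableRel E] (G : GadgetSystem V I) (𝒜 : Finset I)
    (u : V) : Finset I :=
  𝒜.filter fun α => ∀ v ∈ G.Sm α, ¬ E u v

/-- Indices `α ∈ 𝒜` such that `u` has no in-neighbour in `S⁺(α)`. -/
def MissIn (E : V → V → Prop) [DecidableRel E] (G : GadgetSystem V I) (𝒜 : Finset I)
    (u : V) : Finset I :=
  𝒜.filter fun α => ∀ v ∈ G.Sp α, ¬ E v u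

def Nice1 (E : V → V → Prop) [DecidableRel E] (G : GadgetSystem V I) (k t : ℕ)
    (𝒜 : Finset I) (W : Finset V) (u : V) : Prop :=
  u ∈ Vgood E G k t ∩ W ∧ (MissOut E G 𝒜 u).card ≤ k ∧ (MissIn E G 𝒜 u).card ≤ k

def Nice2 (E : V → V → Prop) [DecidableRel E] (G : GadgetSystem V I) (k t : ℕ) (m : ℝ)
    (𝒜 : Finset I) (W : Finset V) (u : V) : Prop :=
  u ∈ (VgoodP E G k t \ VgoodM E G k t) ∩ W ∧ (MissOut E G 𝒜 u).card ≤ k ∧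
    ManyIn (inN E u) m (Nice1 E G k t 𝒜 W)

def Nice3 (E : V → V → Prop) [DecidableRel E] (G : GadgetSystem V I) (k t : ℕ) (m : ℝ)
    (𝒜 : Finset I) (W : Finset V) (u : V) : Prop :=
  u ∈ (VgoodM E G k t \ VgoodP E G k t) ∩ W ∧ (MissIn E G 𝒜 u).card ≤ k ∧
    ManyIn (outN E u) m (fun v => Nice1 E G k t 𝒜 W v ∨ Nice2 E G k t m 𝒜 W v)

def Nice4 (E : V → V → Prop) [DecidableRel E] (G : GadgetSystem V I) (k t : ℕ) (m : ℝ)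
    (𝒜 : Finset I) (W : Finset V) (u : V) : Prop :=
  u ∈ Vbad E G k t ∩ W ∧
    ManyIn (inN E u) m (Nice1 E G k t 𝒜 W) ∧
    ManyIn (outN E u) m (fun v => Nice1 E G k t 𝒜 W v ∨ Nice2 E G k t m 𝒜 W v)

def NiceFor (E : V → V → Prop) [DecidableRel E] (G : GadgetSystem V I) (k t : ℕ) (m : ℝ)
    (𝒜 : Finset I) (W : Finset V) (u : V) : Prop :=
  Nice1 E G k t 𝒜 W u ∨ Nice2 E G k t m 𝒜 W u ∨ Nice3 E G k t m 𝒜 W u ∨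
    Nice4 E G k t m 𝒜 W u

/-- `u` is eligible for `𝒜` in `W`. -/
def Eligible (E : V → V → Prop) [DecidableRel E] (G : GadgetSystem V I) (k t τ₃ : ℕ)
    (𝒜 : Finset I) (W : Finset V) (u : V) : Prop :=
  NiceFor E G k t ((τ₃ * k * t : ℕ) : ℝ) 𝒜 W u

/-- `u` is helpful for `𝒜` in `W`. -/
def Helpful (E : V → V → Prop) [DecidableRel E] (G : GadgetSystem V I) (k t : ℕ)
    (𝒜 : Finset I) (W : Finset V) (u : V) : Prop :=
  NiceFor E G k t (k : ℝ) 𝒜 W u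

end Defs

noncomputable def phi0 (τ₁ : ℕ) : ℝ := (τ₁ : ℝ) / 4
noncomputable def phi1 (τ₁ : ℕ) : ℝ := phi0 τ₁ / (2 ^ 6 * (rho : ℝ))
noncomputable def phi2 (τ₁ : ℕ) : ℝ := phi1 τ₁ / (2 ^ 14 * (rho : ℝ) ^ 2)
noncomputable def phi3 (τ₁ : ℕ) : ℝ := phi2 τ₁ / (2 ^ 14 * (rho : ℝ) ^ 2)

section Rare

/-- At most a proportion `q` of the elements of `s` satisfy `P`. -/
def RareIn {Ω : Type*} (s : Finset Ω) (q : ℝ) (P : Ω → Prop) : Prop :=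
  ∀ s' ⊆ s, (∀ ω ∈ s', P ω) → (s'.card : ℝ) ≤ q * s.card

variable {Ω α : Type*} {s : Finset Ω} {q q₁ q₂ : ℝ} {P Q : Ω → Prop}

lemma RareIn.mono (h : RareIn s q₁ P) (hq : q₁ ≤ q₂) (hPQ : ∀ ω ∈ s, Q ω → P ω) :
    RareIn s q₂ Q := fun s' hs' hQ =>
  (h s' hs' fun ω hω => hPQ ω (hs' hω) (hQ ω hω)).trans (by gcongr)

lemma RareIn.or (hP : RareIn s q₁ P) (hQ : RareIn s q₂ Q) :
    RareIn s (q₁ + q₂) (fun ω => P ω ∨ Q ω) := by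
  classical
  intro s' hs' h
  have h1 := hP (s'.filter P) ((filter_subset _ _).trans hs') fun ω hω => (mem_filter.1 hω).2
  have h2 := hQ (s'.filter Q) ((filter_subset _ _).trans hs') fun ω hω => (mem_filter.1 hω).2
  have h3 : s' ⊆ s'.filter P ∪ s'.filter Q := fun ω hω => by
    simpa [hω] using h ω hω
  have h4 : (s'.card : ℝ) ≤ (s'.filter P).card + (s'.filter Q).card := by
    exact_mod_cast (card_le_card h3).trans (card_union_le _ _)
  linarith

lemma RareIn.exists_mem (Y : Finset α) {P : Ω → α → Prop}
    (h : ∀ y ∈ Y, RareIn s q (fun ω => P ω y)) :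
    RareIn s (Y.card * q) (fun ω => ∃ y ∈ Y, P ω y) := by
  classical
  intro s' hs' hP
  have hsub : s' ⊆ Y.biUnion fun y => s'.filter (P · y) := fun ω hω => by
    obtain ⟨y, hy, h2⟩ := hP ω hω
    exact mem_biUnion.2 ⟨y, hy, mem_filter.2 ⟨hω, h2⟩⟩
  calc (s'.card : ℝ) ≤ ∑ y ∈ Y, ((s'.filter (P · y)).card : ℝ) := by
        exact_mod_cast (card_le_card hsub).trans card_biUnion_le
    _ ≤ ∑ y ∈ Y, q * s.card := sum_le_sum fun y hy =>
        h y hy _ ((filter_subset _ _).trans hs') fun ω hω => (mem_filter.1 hω).2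
    _ = _ := by rw [sum_const, nsmul_eq_mul, mul_assoc]

/-- Markov's inequality for the number of elements of `Y` that fail. -/
lemma RareIn.half_fail (hq : 0 ≤ q) (Y : Finset α) {P : Ω → α → Prop}
    (h : ∀ y ∈ Y, RareIn s q (fun ω => P ω y)) :
    RareIn s (2 * q) (fun ω => ∃ Z ⊆ Y, Y.card < 2 * Z.card ∧ ∀ y ∈ Z, P ω y) := by
  classical
  intro s' hs' hP
  have hP' : ∀ ω ∈ s', Y.card < 2 * (Y.filter (P ω)).card := fun ω hω => by
    obtain ⟨Z, hZ, hc, hPZ⟩ := hP ω hω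
    have : Z ⊆ Y.filter (P ω) := fun y hy => mem_filter.2 ⟨hZ hy, hPZ y hy⟩
    have := card_le_card this
    omega
  rcases Y.eq_empty_or_nonempty with rfl | hY
  · have : s' = ∅ := eq_empty_of_forall_notMem fun ω hω => by simpa using hP' ω hω
    subst this
    simp only [card_empty, Nat.cast_zero]
    positivity
  have hY' : (0 : ℝ) < Y.card := by exact_mod_cast hY.card_pos
  have hdc : ∑ ω ∈ s', ((Y.filter (P ω)).card : ℝ) = ∑ y ∈ Y, ((s'.filter (P · y)).card : ℝ) := by
    exact_mod_cast sum_card_bipartiteAbove_eq_sum_card_bipartiteBelow P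
  have h1 : (s'.card : ℝ) * (Y.card / 2) ≤ ∑ ω ∈ s', ((Y.filter (P ω)).card : ℝ) := by
    rw [← nsmul_eq_mul]
    refine card_nsmul_le_sum _ _ _ fun ω hω => ?_
    have : (Y.card : ℝ) < 2 * (Y.filter (P ω)).card := by exact_mod_cast hP' ω hω
    linarith
  have h2 : ∑ y ∈ Y, ((s'.filter (P · y)).card : ℝ) ≤ Y.card * (q * s.card) := by
    rw [← nsmul_eq_mul]
    exact sum_le_card_nsmul _ _ _ fun y hy =>
        h y hy _ ((filter_subset _ _).trans hs') fun ω hω => (mem_filter.1 hω).2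
  rw [hdc] at h1
  have h3 : (Y.card : ℝ) * s'.card ≤ Y.card * (2 * q * s.card) := by linarith
  exact le_of_mul_le_mul_left h3 hY'

/-- If `s` has many elements satisfying `P`, few of which lie in `X`, and those outside `X`
rarely fail `Q`, then `s` rarely fails to have many elements satisfying `Q`. -/
lemma RareIn.not_manyIn [DecidableEq α] (hq : 0 ≤ q) {N : Finset α} {X : Finset α} {m m' : ℝ}
    {P : α → Prop} {Q : Ω → α → Prop} (hN : ManyIn N m P) (hX : 2 * m' + X.card ≤ m)
    (h : ∀ y, P y → y ∉ X → RareIn s q (fun ω => ¬ Q ω y)) :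
    RareIn s (2 * q) (fun ω => ¬ ManyIn N m' (Q ω)) := by
  classical
  obtain ⟨N', hN', hm, hP⟩ := hN
  refine (RareIn.half_fail hq (N' \ X) (P := fun ω y => ¬ Q ω y) fun y hy => ?_).mono le_rfl
    fun ω _ hω => ?_
  · rw [mem_sdiff] at hy
    exact h y (hP y hy.1) hy.2
  · refine ⟨(N' \ X).filter (¬ Q ω ·), filter_subset _ _, ?_, fun y hy => (mem_filter.1 hy).2⟩
    by_contra! hc
    apply hω
    refine ⟨(N' \ X).filter (Q ω ·), (filter_subset _ _).trans (sdiff_subset.trans hN'), ?_,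
      fun y hy => (mem_filter.1 hy).2⟩
    have h1 := card_filter_add_card_filter_not (s := N' \ X) (Q ω ·)
    have h2 : N'.card ≤ (N' \ X).card + X.card := by
      have := le_card_sdiff X N'
      omega
    have h3 : ((N' \ X).card : ℝ) ≤ 2 * ((N' \ X).filter (Q ω ·)).card := by
      exact_mod_cast (by omega :
        (N' \ X).card ≤ 2 * ((N' \ X).filter (Q ω ·)).card)
    have h4 : (N'.card : ℝ) ≤ (N' \ X).card + X.card := by exact_mod_cast h2
    linarith

end Rare

section Transversal

variable {R G : Type*} [Fintype R] [DecidableEq R] [Fintype G] [DecidableEq G]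

/-- The transversals `b ↦ (b, f b)` of `R × G` through `(a, j)`. -/
def through (a : R) (j : G) : Finset (R → G) := univ.filter fun f => f a = j

lemma exp_div_five_hundred_le {k : ℕ} (hk : 100 ≤ k) :
    Real.exp ((k : ℝ) / 500) ≤ 1 / 10 ^ 9 * 2 ^ k := by
  have h1 : Real.exp (1 / 500 : ℝ) ≤ 3 / 2 := by
    have h := Real.one_sub_le_exp_neg (1 / 500 : ℝ)
    have h2 : Real.exp (1 / 500 : ℝ) * Real.exp (-(1 / 500 : ℝ)) = 1 := by
      rw [← Real.exp_add]; simp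
    nlinarith [Real.exp_pos (1 / 500 : ℝ)]
  have h2 : Real.exp ((k : ℝ) / 500) = Real.exp (1 / 500 : ℝ) ^ k := by
    rw [← Real.exp_nat_mul]; congr 1; ring
  have h3 : ((3 : ℝ) / 4) ^ k ≤ 1 / 10 ^ 9 :=
    (pow_le_pow_of_le_one (by norm_num) (by norm_num) hk).trans (by norm_num)
  calc Real.exp ((k : ℝ) / 500) ≤ (3 / 2) ^ k := by rw [h2]; gcongr
    _ = (3 / 4) ^ k * 2 ^ k := by rw [← mul_pow]; norm_num
    _ ≤ _ := by gcongr

lemma rareIn_through_card (Q : Finset (R × G)) (a : R) (j : G) {k : ℕ}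
    (hQ : 500 * Q.card ≤ k * Fintype.card G) (hk : 100 ≤ k) :
    RareIn (through a j) (1 / 10 ^ 9)
      (fun f => k < (univ.filter fun b => (b, f b) ∈ Q).card) := by
  intro bad hbs hlt
  set M : ℝ := ((Fintype.card G : ℕ) : ℝ) with hM
  have hM0 : 0 < M := by
    have : 0 < Fintype.card G := Fintype.card_pos_iff.2 ⟨j⟩
    rw [hM]
    exact_mod_cast this
  set s : R → Finset G := fun b => if b = a then {j} else univ with hs
  have hthr : through a j = Fintype.piFinset s := by
    ext f
    simp only [through, mem_filter, mem_univ, true_and, Fintype.mem_piFinset, hs]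
    constructor
    · intro h b
      split_ifs with hb
      · simp [hb, h]
      · simp
    · intro h
      simpa using h a
  let h : R → G → ℝ := fun b g => if (b, g) ∈ Q then 2 else 1
  have hprod : ∀ f : R → G, ∏ b, h b (f b) = 2 ^ (univ.filter fun b => (b, f b) ∈ Q).card := by
    intro f
    simp [h, prod_ite]
  let r : R → Finset G := fun b => univ.filter fun g => (b, g) ∈ Q
  have hr : ∑ b, (r b).card = Q.card := by
    rw [← card_sigma]
    refine card_bij (fun x _ => (x.1, x.2)) ?_ ?_ ?_
    · rintro ⟨b, g⟩ hx
      simpa [r] using hx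
    · rintro ⟨b, g⟩ _ ⟨b', g'⟩ _ hx
      simp only [Prod.mk.injEq] at hx
      obtain ⟨rfl, rfl⟩ := hx
      rfl
    · rintro ⟨b, g⟩ hx
      exact ⟨⟨b, g⟩, by simpa [r] using hx, rfl⟩
  have hrow : ∀ b, ∑ g ∈ s b, h b g ≤
      ((s b).card * if b = a then 2 else 1) * Real.exp ((r b).card / M) := by
    intro b
    by_cases hb : b = a
    · have h1 : ∑ g ∈ s b, h b g ≤ 2 := by
        simp only [hs, hb, if_true, sum_singleton, h]
        split_ifs <;> norm_num
      have h2 : (1 : ℝ) ≤ Real.exp ((r b).card / M) := Real.one_le_exp (by positivity)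
      have h3 : ((s b).card : ℝ) = 1 := by simp [hs, hb]
      rw [h3, if_pos hb]
      linarith
    · have h1 : ∑ g ∈ s b, h b g = M + (r b).card := by
        have : ∀ g, h b g = 1 + if (b, g) ∈ Q then 1 else 0 := by
          intro g; simp only [h]; split_ifs <;> norm_num
        simp [hs, hb, this, sum_add_distrib, r, hM]
      have h3 : ((s b).card : ℝ) = M := by simp [hs, hb, hM]
      rw [h1, h3, if_neg hb]
      have h2 := Real.add_one_le_exp ((r b).card / M)
      have h4 : M * ((r b).card / M) = (r b).card := by field_simp
      nlinarith
  have hsum : ∑ f ∈ through a j, ∏ b, h b (f b) ≤ (through a j).card * 2 * Real.exp (k / 500) := by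
    rw [hthr, ← prod_univ_sum]
    calc ∏ b, ∑ g ∈ s b, h b g
        ≤ ∏ b, (((s b).card * if b = a then 2 else 1) * Real.exp ((r b).card / M)) := by
          refine prod_le_prod (fun b _ => sum_nonneg fun g _ => ?_) fun b _ => hrow b
          simp only [h]; split_ifs <;> norm_num
      _ = (Fintype.piFinset s).card * 2 * Real.exp (Q.card / M) := by
          rw [prod_mul_distrib, prod_mul_distrib, ← Real.exp_sum, ← sum_div, Fintype.card_piFinset,
            ← hr]
          simp
      _ ≤ _ := by
          refine mul_le_mul_of_nonneg_left (Real.exp_le_exp.2 ?_) (by positivity)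
          rw [div_le_div_iff₀ hM0 (by norm_num)]
          have : ((500 * Q.card : ℕ) : ℝ) ≤ (k * Fintype.card G : ℕ) := by exact_mod_cast hQ
          push_cast at this
          linarith
  have hbad : (bad.card : ℝ) * 2 ^ (k + 1) ≤ ∑ f ∈ through a j, ∏ b, h b (f b) := by
    calc (bad.card : ℝ) * 2 ^ (k + 1) = ∑ f ∈ bad, (2 : ℝ) ^ (k + 1) := by simp
      _ ≤ ∑ f ∈ bad, ∏ b, h b (f b) := by
        refine sum_le_sum fun f hf => ?_
        rw [hprod]
        exact pow_le_pow_right₀ (by norm_num) (hlt f hf)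
      _ ≤ _ := by
        refine sum_le_sum_of_subset_of_nonneg hbs fun f _ _ => ?_
        rw [hprod]; positivity
  have hexp := exp_div_five_hundred_le hk
  have h2k : (0 : ℝ) < 2 ^ k := by positivity
  have hc : (0 : ℝ) ≤ (through a j).card := by positivity
  have : (bad.card : ℝ) * (2 ^ k) ≤ (1 / 10 ^ 9 * (through a j).card) * 2 ^ k := by
    rw [pow_succ] at hbad
    nlinarith [mul_le_mul_of_nonneg_left hexp hc]
  exact le_of_mul_le_mul_right this h2k

/-- If each position of each transversal is rarely bad, then some family of translates of a
transversal contains few members with at least half of their positions bad. -/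
lemma exists_translates_few_bad [AddCommGroup G] (Bad : (R → G) → R → Prop)
    (h : ∀ a j, RareIn (through a j) (1 / 200) (fun f => Bad f a)) :
    ∃ (f : R → G) (J : Finset G), 99 * Fintype.card G ≤ 100 * J.card ∧
      ∀ i ∈ J, ∃ A : Finset R, Fintype.card R ≤ 2 * A.card ∧
        ∀ a ∈ A, ¬ Bad (fun b => f b + i) a := by
  classical
  have h1 : ∀ a ∈ (univ : Finset R), RareIn univ (1 / 200) (fun f : R → G => Bad f a) := by
    intro a _ s' _ hs'
    have e1 : (s'.card : ℝ) = ∑ j : G, ((s'.filter fun f => f a = j).card : ℝ) := by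
      exact_mod_cast card_eq_sum_card_fiberwise (f := fun f : R → G => f a) (t := univ)
        fun _ _ => by simp
    have e2 : ((univ : Finset (R → G)).card : ℝ) = ∑ j : G, ((through a j).card : ℝ) := by
      exact_mod_cast card_eq_sum_card_fiberwise (f := fun f : R → G => f a) (t := univ)
        fun _ _ => by simp
    rw [e1, e2, mul_sum]
    refine sum_le_sum fun j _ => h a j _ ?_ fun f hf => hs' f (mem_filter.1 hf).1
    exact filter_subset_filter _ (subset_univ _)
  have h2 := RareIn.half_fail (by norm_num) univ h1
  set T : (R → G) → Prop := fun f => ∃ Z ⊆ (univ : Finset R),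
    (univ : Finset R).card < 2 * Z.card ∧ ∀ y ∈ Z, Bad f y
  have h3 : ∀ i : G, (((univ : Finset (R → G)).filter fun f => T fun b => f b + i).card : ℝ)
      ≤ 1 / 100 * (univ : Finset (R → G)).card := by
    intro i
    have hinj : Function.Injective fun (f : R → G) (b : R) => f b + i := fun f g hfg => by
      funext b
      simpa using congrFun hfg b
    rw [← card_image_of_injective _ hinj]
    have := h2 (((univ : Finset (R → G)).filter fun f => T fun b => f b + i).image
      fun f b => f b + i) (subset_univ _) fun f hf => by
        obtain ⟨g, hg, rfl⟩ := mem_image.1 hf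
        exact (mem_filter.1 hg).2
    linarith
  have h4 : ∑ f : R → G, (((univ : Finset G).filter fun i => T fun b => f b + i).card : ℝ)
      ≤ ∑ f : R → G, (1 / 100 * Fintype.card G : ℝ) := by
    have hdc : ∑ f : R → G, (((univ : Finset G).filter fun i => T fun b => f b + i).card : ℝ)
        = ∑ i : G, (((univ : Finset (R → G)).filter fun f => T fun b => f b + i).card : ℝ) := by
      exact_mod_cast sum_card_bipartiteAbove_eq_sum_card_bipartiteBelow
        (fun (f : R → G) (i : G) => T fun b => f b + i)
    rw [hdc]
    calc _ ≤ ∑ i : G, (1 / 100 * (univ : Finset (R → G)).card : ℝ) := sum_le_sum fun i _ => h3 i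
      _ = _ := by
        rw [sum_const, sum_const, nsmul_eq_mul, nsmul_eq_mul, card_univ (α := G)]
        ring
  obtain ⟨f, -, hf⟩ := exists_le_of_sum_le ⟨fun _ => 0, mem_univ _⟩ h4
  refine ⟨f, univ.filter fun i => ¬ T fun b => f b + i, ?_, fun i hi => ?_⟩
  · have hc := card_filter_add_card_filter_not (s := (univ : Finset G))
      (fun i => T fun b => f b + i)
    have hu : (univ : Finset G).card = Fintype.card G := card_univ
    have : 100 * ((univ : Finset G).filter fun i => T fun b => f b + i).card
        ≤ Fintype.card G := by
      have : (100 * ((univ : Finset G).filter fun i => T fun b => f b + i).card : ℝ)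
        ≤ Fintype.card G := by linarith
      exact_mod_cast this
    omega
  · have hi' := (mem_filter.1 hi).2
    refine ⟨univ.filter fun a => ¬ Bad (fun b => f b + i) a, ?_, fun a ha => (mem_filter.1 ha).2⟩
    by_contra! hlt
    refine hi' ⟨univ.filter fun a => Bad (fun b => f b + i) a, subset_univ _, ?_,
      fun a ha => (mem_filter.1 ha).2⟩
    have hc := card_filter_add_card_filter_not (s := (univ : Finset R))
      (fun a => Bad (fun b => f b + i) a)
    rw [card_univ] at *
    omega

/-- The image in `I` of the transversal `b ↦ (b, f b)`. -/
def transversal {I : Type*} [DecidableEq I] (ι : R × G ↪ I) (f : R → G) : Finset I :=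
  univ.image fun b => ι (b, f b)

lemma rareIn_through_filter_transversal {I : Type*} [Fintype I] [DecidableEq I] (ι : R × G ↪ I)
    (p : I → Prop) [DecidablePred p] (a : R) (j : G) {k : ℕ}
    (hp : 500 * (univ.filter p).card ≤ k * Fintype.card G) (hk : 100 ≤ k) :
    RareIn (through a j) (1 / 10 ^ 9) (fun f => k < ((transversal ι f).filter p).card) := by
  have hQ : (univ.filter fun x => p (ι x)).card ≤ (univ.filter p).card :=
    card_le_card_of_injOn ι (fun x hx => by simpa using hx) ι.injective.injOn
  refine (rareIn_through_card (univ.filter fun x => p (ι x)) a j (by omega) hk).mono le_rfl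
    fun f _ hf => hf.trans_le ?_
  rw [transversal, filter_image]
  refine card_image_le.trans (card_le_card fun b hb => ?_)
  simpa using hb

end Transversal

section Eligible

lemma ManyIn.mono {α : Type*} {s : Finset α} {m : ℝ} {P Q : α → Prop} (h : ManyIn s m P)
    (hPQ : ∀ x, P x → Q x) : ManyIn s m Q := by
  obtain ⟨s', hs, hm, hP⟩ := h
  exact ⟨s', hs, hm, fun x hx => hPQ x (hP x hx)⟩

variable {V I : Type*} [Fintype V] [DecidableEq V] [Fintype I]
  {E : V → V → Prop} [DecidableRel E] {G : GadgetSystem V I} {k t : ℕ}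

section Mono

variable {m : ℝ} {C D : Finset I} {W W' : Finset V} {u : V}

lemma Nice1.mono (h : Nice1 E G k t D W u) (hC : C ⊆ D) (hW : W ⊆ W') : Nice1 E G k t C W' u :=
  ⟨inter_subset_inter_left hW h.1, (card_le_card (filter_subset_filter _ hC)).trans h.2.1,
    (card_le_card (filter_subset_filter _ hC)).trans h.2.2⟩

lemma Nice2.mono (h : Nice2 E G k t m D W u) (hC : C ⊆ D) (hW : W ⊆ W') :
    Nice2 E G k t m C W' u :=
  ⟨inter_subset_inter_left hW h.1, (card_le_card (filter_subset_filter _ hC)).trans h.2.1,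
    h.2.2.mono fun _ hx => hx.mono hC hW⟩

lemma NiceFor.mono (h : NiceFor E G k t m D W u) (hC : C ⊆ D) (hW : W ⊆ W') :
    NiceFor E G k t m C W' u := by
  have h12 : ∀ x, Nice1 E G k t D W x ∨ Nice2 E G k t m D W x →
      Nice1 E G k t C W' x ∨ Nice2 E G k t m C W' x :=
    fun _ hx => hx.imp (·.mono hC hW) (·.mono hC hW)
  rcases h with h | h | h | h
  · exact Or.inl (h.mono hC hW)
  · exact Or.inr (Or.inl (h.mono hC hW))
  · exact Or.inr (Or.inr (Or.inl ⟨inter_subset_inter_left hW h.1,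
      (card_le_card (filter_subset_filter _ hC)).trans h.2.1, h.2.2.mono h12⟩))
  · exact Or.inr (Or.inr (Or.inr ⟨inter_subset_inter_left hW h.1,
      h.2.1.mono fun _ hx => hx.mono hC hW, h.2.2.mono h12⟩))

end Mono

variable [DecidableEq I] {R A : Type*} [Fintype R] [DecidableEq R] [Fintype A] [DecidableEq A]
  {ι : R × A ↪ I} {a : R} {j : A}

lemma rareIn_missOut (hA : Fintype.card A = 500 * t) (hk : 100 ≤ k) {v : V}
    (hv : v ∈ VgoodP E G k t) :
    RareIn (through a j) (1 / 10 ^ 9) (fun f => k < (MissOut E G (transversal ι f) v).card) := by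
  refine rareIn_through_filter_transversal ι _ a j ?_ hk
  simp only [VgoodP, VbadP, mem_sdiff, mem_filter, not_and, not_le] at hv
  have := hv.2 hv.1
  rw [hA]
  nlinarith

lemma rareIn_missIn (hA : Fintype.card A = 500 * t) (hk : 100 ≤ k) {v : V}
    (hv : v ∈ VgoodM E G k t) :
    RareIn (through a j) (1 / 10 ^ 9) (fun f => k < (MissIn E G (transversal ι f) v).card) := by
  refine rareIn_through_filter_transversal ι _ a j ?_ hk
  simp only [VgoodM, VbadM, mem_sdiff, mem_filter, not_and, not_le] at hv
  have := hv.2 hv.1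
  rw [hA]
  nlinarith

lemma rareIn_not_eligible (hA : Fintype.card A = 500 * t) (hk : 100 ≤ k) {τ₂ τ₃ : ℕ}
    {W X : Finset V}
    (hX : 2 * ((τ₃ * k * t : ℕ) : ℝ) + X.card ≤ ((τ₂ * k * t : ℕ) : ℝ)) {v : V}
    (hv : Available E G k t τ₂ W v) (hvX : v ∉ X) :
    RareIn (through a j) (14 / 10 ^ 9)
      (fun f => ¬ Eligible E G k t τ₃ (transversal ι f) (W \ X) v) := by
  have hW : ∀ {S : Finset V} {y : V}, y ∈ S ∩ W → y ∉ X → y ∈ S ∩ (W \ X) := fun h h' => by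
    simp only [mem_inter, mem_sdiff] at *
    exact ⟨h.1, h.2, h'⟩
  have h1 : ∀ y, AvailA1 E G k t W y → y ∉ X → RareIn (through a j) (2 / 10 ^ 9)
      (fun f => ¬ Nice1 E G k t (transversal ι f) (W \ X) y) := by
    intro y hy hyX
    have hy' := mem_inter.1 (mem_inter.1 hy).1
    refine ((rareIn_missOut (ι := ι) hA hk hy'.1).or
      (rareIn_missIn (ι := ι) hA hk hy'.2)).mono (by norm_num) fun f _ hf => ?_
    contrapose! hf
    exact ⟨hW hy hyX, hf⟩
  have h2 : ∀ y, AvailA2 E G k t τ₂ W y → y ∉ X → RareIn (through a j) (5 / 10 ^ 9)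
      (fun f => ¬ Nice2 E G k t ((τ₃ * k * t : ℕ) : ℝ) (transversal ι f) (W \ X) y) := by
    intro y hy hyX
    have hy' := mem_sdiff.1 (mem_inter.1 hy.1).1
    refine ((rareIn_missOut (ι := ι) hA hk hy'.1).or
      (RareIn.not_manyIn (by norm_num) hy.2 hX h1)).mono (by norm_num) fun f _ hf => ?_
    contrapose! hf
    exact ⟨hW hy.1 hyX, hf⟩
  have h12 : ∀ y, AvailA1 E G k t W y ∨ AvailA2 E G k t τ₂ W y → y ∉ X →
      RareIn (through a j) (5 / 10 ^ 9)
        (fun f => ¬ (Nice1 E G k t (transversal ι f) (W \ X) y ∨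
          Nice2 E G k t ((τ₃ * k * t : ℕ) : ℝ) (transversal ι f) (W \ X) y)) := by
    rintro y (hy | hy) hyX
    · exact (h1 y hy hyX).mono (by norm_num) fun f _ hf => fun h => hf (Or.inl h)
    · exact (h2 y hy hyX).mono (by norm_num) fun f _ hf => fun h => hf (Or.inr h)
  rcases hv with hv | hv | hv | hv
  · exact (h1 v hv hvX).mono (by norm_num) fun f _ hf => fun h => hf (Or.inl h)
  · exact (h2 v hv hvX).mono (by norm_num) fun f _ hf => fun h => hf (Or.inr (Or.inl h))
  · have hv' := mem_sdiff.1 (mem_inter.1 hv.1).1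
    refine ((rareIn_missIn (ι := ι) hA hk hv'.1).or
      (RareIn.not_manyIn (by norm_num) hv.2 hX h12)).mono (by norm_num) fun f _ hf => ?_
    contrapose! hf
    exact Or.inr (Or.inr (Or.inl ⟨hW hv.1 hvX, hf⟩))
  · refine ((RareIn.not_manyIn (by norm_num) hv.2.2 hX h1).or
      (RareIn.not_manyIn (by norm_num) hv.2.1 hX h12)).mono (by norm_num) fun f _ hf => ?_
    contrapose! hf
    exact Or.inr (Or.inr (Or.inr ⟨hW hv.1 hvX, hf⟩))

/-- The index family `D` is suitable for `α`, where `W` is the set of permitted vertices. -/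
def Suitable (E : V → V → Prop) [DecidableRel E] (G : GadgetSystem V I) (k t τ₃ : ℕ)
    (D : Finset I) (W : Finset V) (α : I) : Prop :=
  (∀ u ∈ G.S α, ManyIn (outN E u) ((τ₃ * k * t : ℕ) : ℝ) (Eligible E G k t τ₃ D (W \ G.X α)) ∧
    ManyIn (inN E u) ((τ₃ * k * t : ℕ) : ℝ) (Eligible E G k t τ₃ D (W \ G.X α))) ∧
  ManyIn (Vgood E G k t) ((Vgood E G k t).card / 2)
    (fun v => (MissOut E G D v).card ≤ k ∧ (MissIn E G D v).card ≤ k)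

lemma rareIn_not_suitable (hA : Fintype.card A = 500 * t) (hk : 100 ≤ k) {τ₂ τ₃ : ℕ}
    {W : Finset V} {α : I} (hS : (G.S α).card ≤ 10 ^ 4)
    (hX : 2 * ((τ₃ * k * t : ℕ) : ℝ) + (G.X α).card ≤ ((τ₂ * k * t : ℕ) : ℝ))
    (hav : ∀ s ∈ G.S α, ManyIn (outN E s) ((τ₂ * k * t : ℕ) : ℝ) (Available E G k t τ₂ W) ∧
      ManyIn (inN E s) ((τ₂ * k * t : ℕ) : ℝ) (Available E G k t τ₂ W)) :
    RareIn (through a j) (1 / 200) (fun f => ¬ Suitable E G k t τ₃ (transversal ι f) W α) := by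
  have hel := fun v (hv : Available E G k t τ₂ W v) hvX =>
    rareIn_not_eligible (ι := ι) (a := a) (j := j) hA hk hX hv hvX
  have h1 := RareIn.exists_mem (G.S α) fun u hu =>
    (RareIn.not_manyIn (by norm_num) (hav u hu).1 hX hel).or
      (RareIn.not_manyIn (by norm_num) (hav u hu).2 hX hel)
  have h2 : RareIn (through a j) (2 * (2 / 10 ^ 9)) (fun f =>
      ¬ ManyIn (Vgood E G k t) ((Vgood E G k t).card / 2) (fun v =>
        (MissOut E G (transversal ι f) v).card ≤ k ∧
          (MissIn E G (transversal ι f) v).card ≤ k)) := by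
    refine RareIn.not_manyIn (by norm_num) (X := ∅) (m := (Vgood E G k t).card)
      (P := (· ∈ Vgood E G k t)) ⟨_, Subset.rfl, le_rfl, fun _ h => h⟩ ?_ fun y hy _ => ?_
    · simp only [card_empty, Nat.cast_zero, add_zero]
      linarith
    · have hy' := mem_inter.1 hy
      refine ((rareIn_missOut (ι := ι) hA hk hy'.1).or
        (rareIn_missIn (ι := ι) hA hk hy'.2)).mono (by norm_num) fun f _ hf => ?_
      contrapose! hf
      exact hf
  refine (h1.or h2).mono ?_ fun f _ hf => ?_
  · have : ((G.S α).card : ℝ) ≤ 10 ^ 4 := by exact_mod_cast hS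
    linarith
  · contrapose! hf
    exact hf

end Eligible

section Heavy

variable {V I J : Type*} [Fintype V] [DecidableEq V]

/-- Among disjoint index families, few have a large union of gadgets. -/
lemma card_heavy_le [Nonempty V] {G : GadgetSystem V I} (hG : CondG1 G) [DecidableEq J]
    {D : J → Finset I} (hD : ∀ i j, i ≠ j → Disjoint (D i) (D j)) (H : Finset J) {c : ℕ}
    (hH : ∀ i ∈ H, Fintype.card V ≤ c * ((D i).biUnion G.U).card) : H.card ≤ c := by
  have hdis : Set.PairwiseDisjoint (H : Set J) fun i => (D i).biUnion G.U := by
    intro i _ j _ hij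
    refine (disjoint_biUnion_left _ _ _).2 fun α hα => (disjoint_biUnion_right _ _ _).2 fun β hβ =>
      hG α β ?_
    rintro rfl
    exact disjoint_left.1 (hD i j hij) hα hβ
  have h1 : ∑ i ∈ H, ((D i).biUnion G.U).card ≤ Fintype.card V := by
    rw [← card_biUnion hdis]
    exact card_le_univ _
  have h2 : H.card * Fintype.card V ≤ c * Fintype.card V := by
    calc H.card * Fintype.card V ≤ ∑ i ∈ H, c * ((D i).biUnion G.U).card := by
          rw [← smul_eq_mul]
          exact card_nsmul_le_sum _ _ _ hH
      _ = c * ∑ i ∈ H, ((D i).biUnion G.U).card := by rw [mul_sum]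
      _ ≤ _ := by gcongr
  exact le_of_mul_le_mul_right h2 Fintype.card_pos

end Heavy

section Partition

variable {V I : Type*} [Fintype V] [DecidableEq V] [Fintype I] [DecidableEq I]
  {E : V → V → Prop} [DecidableRel E] {G : GadgetSystem V I} {k t τ₂ τ₃ : ℕ}

lemma exists_partition_eligible (hG1 : CondG1 G) (hG6 : CondG6 E G k t)
    (hk : 100 ≤ k) (ht : 2 ≤ t) (hS : ∀ α, (G.S α).card ≤ 10 ^ 4)
    (hX : ∀ α, 2 * ((τ₃ * k * t : ℕ) : ℝ) + (G.X α).card ≤ ((τ₂ * k * t : ℕ) : ℝ))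
    {D : Finset I} (hD : D.card = 10 ^ 4 * k * t)
    (hav : ∀ α ∈ D, ∀ s ∈ G.S α,
      ManyIn (outN E s) ((τ₂ * k * t : ℕ) : ℝ) (Available E G k t τ₂ (Wof G (D.erase α))) ∧
      ManyIn (inN E s) ((τ₂ * k * t : ℕ) : ℝ) (Available E G k t τ₂ (Wof G (D.erase α)))) :
    ∃ B : Fin (10 * t) → Finset I,
      (∀ i, B i ⊆ D) ∧ (∀ i j, i ≠ j → Disjoint (B i) (B j)) ∧ (∀ i, (B i).card = 10 * k) ∧
      (∀ i, ∀ α ∈ B i, ∀ u ∈ G.S α,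
        ManyIn (outN E u) ((τ₃ * k * t : ℕ) : ℝ)
          (Eligible E G k t τ₃ (B i) (Wof G (univ.biUnion B \ B i) \ G.X α)) ∧
        ManyIn (inN E u) ((τ₃ * k * t : ℕ) : ℝ)
          (Eligible E G k t τ₃ (B i) (Wof G (univ.biUnion B \ B i) \ G.X α))) ∧
      (∀ i, ManyIn (Vgood E G k t ∩ Wof G (univ.biUnion B)) ((Fintype.card V : ℝ) / 10)
        (Eligible E G k t τ₃ (B i) (Wof G (univ.biUnion B)))) := by
  classical
  have : NeZero (500 * t) := ⟨by omega⟩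
  have hA : Fintype.card (ZMod (500 * t)) = 500 * t := ZMod.card _
  have hcard : Fintype.card (Fin (20 * k) × ZMod (500 * t)) = Fintype.card D := by
    rw [Fintype.card_prod, Fintype.card_fin, hA, Fintype.card_coe, hD]
    ring
  let e := Fintype.equivOfCardEq hcard
  let ι : Fin (20 * k) × ZMod (500 * t) ↪ I := e.toEmbedding.trans (Function.Embedding.subtype _)
  have hι : ∀ x, ι x ∈ D := fun x => (e x).2
  have hne : Nonempty V := ⟨G.sp (ι (⟨0, by omega⟩, 0))⟩
  obtain ⟨f, J, hJ, hf⟩ := exists_translates_few_bad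
    (fun f a => ¬ Suitable E G k t τ₃ (transversal ι f) (Wof G (D.erase (ι (a, f a)))) (ι (a, f a)))
    (fun a j => (rareIn_not_suitable (ι := ι) (a := a) (j := j) hA hk (hS (ι (a, j)))
      (hX (ι (a, j))) (hav _ (hι (a, j)))).mono le_rfl fun f hf => by
        have hfa : f a = j := (mem_filter.1 hf).2
        rw [hfa]
        exact id)
  let F : ZMod (500 * t) → Finset I := fun i => transversal ι fun b => f b + i
  have hF : ∀ i j, i ≠ j → Disjoint (F i) (F j) := by
    intro i j hij
    rw [disjoint_left]
    intro x hx hx'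
    obtain ⟨b, -, rfl⟩ := mem_image.1 hx
    obtain ⟨b', -, h⟩ := mem_image.1 hx'
    have h' := ι.injective h
    simp only [Prod.mk.injEq] at h'
    obtain ⟨rfl, h'⟩ := h'
    exact hij (add_left_cancel h').symm
  let H := univ.filter fun i => Fintype.card V ≤ 100 * t * ((F i).biUnion G.U).card
  have hH : H.card ≤ 100 * t := card_heavy_le hG1 hF H fun i hi => (mem_filter.1 hi).2
  have hJH : 10 * t ≤ (J \ H).card := by
    have := le_card_sdiff H J
    omega
  obtain ⟨g⟩ : Nonempty (Fin (10 * t) ↪ (J \ H : Finset _)) :=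
    Function.Embedding.nonempty_of_card_le (by rwa [Fintype.card_fin, Fintype.card_coe])
  have hB : ∀ i : Fin (10 * t), ∃ B ⊆ F (g i), B.card = 10 * k ∧ ∀ α ∈ B,
      Suitable E G k t τ₃ (F (g i)) (Wof G (D.erase α)) α := by
    intro i
    obtain ⟨A, hA, hgood⟩ := hf (g i) (mem_sdiff.1 (g i).2).1
    rw [Fintype.card_fin] at hA
    obtain ⟨A', hA', hc⟩ := exists_subset_card_eq (show 10 * k ≤ A.card by omega)
    refine ⟨A'.image fun b => ι (b, f b + g i), image_subset_image (subset_univ _), ?_, ?_⟩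
    · rw [card_image_of_injective _ fun b b' h => (Prod.ext_iff.1 (ι.injective h)).1, hc]
    · intro α hα
      obtain ⟨b, hb, rfl⟩ := mem_image.1 hα
      exact not_not.1 (hgood b (hA' hb))
  choose B hBF hBc hBs using hB
  have hBD : ∀ i, B i ⊆ D := fun i => (hBF i).trans fun x hx => by
    obtain ⟨b, -, rfl⟩ := mem_image.1 hx
    exact hι _
  have hdis : ∀ i j, i ≠ j → Disjoint (B i) (B j) := fun i j hij =>
    disjoint_of_subset_left (hBF i) (disjoint_of_subset_right (hBF j)
      (hF _ _ fun h => hij (g.injective (Subtype.ext h))))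
  have hW : ∀ i, ∀ α ∈ B i, Wof G (D.erase α) ⊆ Wof G (univ.biUnion B \ B i) := by
    intro i α hα
    refine sdiff_subset_sdiff Subset.rfl (biUnion_subset_biUnion_of_subset_left _ fun β hβ => ?_)
    obtain ⟨h1, h2⟩ := mem_sdiff.1 hβ
    obtain ⟨j, -, hj⟩ := mem_biUnion.1 h1
    exact mem_erase.2 ⟨fun h => h2 (h ▸ hα), hBD j hj⟩
  refine ⟨B, hBD, hdis, hBc, fun i α hα u hu => ?_, fun i => ?_⟩
  · have hs := (hBs i α hα).1 u hu
    have hsub := sdiff_subset_sdiff (hW i α hα) (Subset.refl (G.X α))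
    exact ⟨hs.1.mono fun x hx => NiceFor.mono hx (hBF i) hsub,
      hs.2.mono fun x hx => NiceFor.mono hx (hBF i) hsub⟩
  · obtain ⟨α, hα⟩ : (B i).Nonempty := card_pos.1 (by rw [hBc]; omega)
    obtain ⟨Z, hZ, hZc, hZE⟩ := (hBs i α hα).2
    have hU : 10 * ((univ.biUnion B).biUnion G.U).card ≤ Fintype.card V := by
      have h1 : ((univ.biUnion B).biUnion G.U).card
          ≤ ∑ i : Fin (10 * t), ((B i).biUnion G.U).card := by
        rw [biUnion_biUnion]
        exact card_biUnion_le
      have h2 : ∀ i, 100 * t * ((B i).biUnion G.U).card ≤ Fintype.card V := by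
        intro i
        have h := (mem_sdiff.1 (g i).2).2
        simp only [H, mem_filter, mem_univ, true_and, not_le] at h
        refine le_trans ?_ h.le
        gcongr
        exact hBF i
      have h3 : ∑ i : Fin (10 * t), 100 * t * ((B i).biUnion G.U).card
          ≤ 10 * t * Fintype.card V := by
        refine (sum_le_sum fun i _ => h2 i).trans ?_
        simp
      rw [← mul_sum] at h3
      have h4 : 10 * t * (10 * ((univ.biUnion B).biUnion G.U).card)
          ≤ 10 * t * Fintype.card V := by
        refine le_trans ?_ h3
        calc _ = 100 * t * ((univ.biUnion B).biUnion G.U).card := by ring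
          _ ≤ _ := by gcongr
      exact le_of_mul_le_mul_left h4 (by omega)
    have hmem : ∀ x ∈ Z ∩ Wof G (univ.biUnion B), x ∈ Vgood E G k t ∩ Wof G (univ.biUnion B) :=
      fun x hx => mem_inter.2 ⟨hZ (mem_inter.1 hx).1, (mem_inter.1 hx).2⟩
    refine ⟨Z ∩ Wof G (univ.biUnion B), hmem, ?_, fun x hx => ?_⟩
    · have h1 : Z.card ≤ (Z ∩ Wof G (univ.biUnion B)).card
          + ((univ.biUnion B).biUnion G.U).card := by
        have h := le_card_sdiff ((univ.biUnion B).biUnion G.U) Z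
        have h' : Z \ (univ.biUnion B).biUnion G.U = Z ∩ Wof G (univ.biUnion B) := by
          ext x; simp [Wof]
        rw [h'] at h
        omega
      have h2 : (Z.card : ℝ) ≤ (Z ∩ Wof G (univ.biUnion B)).card
          + ((univ.biUnion B).biUnion G.U).card := by exact_mod_cast h1
      have h3 : (10 * ((univ.biUnion B).biUnion G.U).card : ℝ) ≤ Fintype.card V := by
        exact_mod_cast hU
      have h4 : (0 : ℝ) ≤ Fintype.card V := by positivity
      unfold CondG6 at hG6
      linarith
    · have h := hZE x (mem_inter.1 hx).1
      exact Or.inl (Nice1.mono ⟨hmem x hx, h⟩ (hBF i) Subset.rfl)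

end Partition

/-- Proposition 4.12: partition with many eligible neighbours. -/
theorem statement13 :
    ∃ C : ℕ, ∀ (τ₁ τ₂ τ₃ k t : ℕ),
      C ≤ τ₃ → C * τ₃ ≤ τ₂ → C * τ₂ ≤ τ₁ → C * τ₁ ≤ k → 2 ≤ t →
      ∀ (V : Type) [Fintype V] [DecidableEq V] (E : V → V → Prop) [DecidableRel E],
        IsTournament E → StronglyKConnected E (τ₁ * k * t) →
        ∀ G : GadgetSystem V (Fin (sigma1 * k * t)),
          GadgetHyp E G k t → GadgetHyp2 E G k t τ₁ →
          ∀ 𝒜₂ : Finset (Fin (sigma1 * k * t)),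
            𝒜₂.card = sigma2 * k * t →
            (∀ α ∈ 𝒜₂, ∀ s ∈ G.S α,
              ManyIn (outN E s) ((τ₂ * k * t : ℕ) : ℝ)
                (Available E G k t τ₂ (Wof G (𝒜₂.erase α))) ∧
              ManyIn (inN E s) ((τ₂ * k * t : ℕ) : ℝ)
                (Available E G k t τ₂ (Wof G (𝒜₂.erase α)))) →
            ∃ (𝒜₃ : Finset (Fin (sigma1 * k * t)))
              (B : Fin (sigma3 * t) → Finset (Fin (sigma1 * k * t))),
              𝒜₃ ⊆ 𝒜₂ ∧
              (∀ i j : Fin (sigma3 * t), i ≠ j → Disjoint (B i) (B j)) ∧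
              Finset.univ.biUnion B = 𝒜₃ ∧
              (∀ i, (B i).card = 10 * k) ∧
              (∀ i, ∀ α ∈ B i, ∀ u ∈ G.S α,
                ManyIn (outN E u) ((τ₃ * k * t : ℕ) : ℝ)
                  (Eligible E G k t τ₃ (B i) (Wof G (𝒜₃ \ B i) \ G.X α)) ∧
                ManyIn (inN E u) ((τ₃ * k * t : ℕ) : ℝ)
                  (Eligible E G k t τ₃ (B i) (Wof G (𝒜₃ \ B i) \ G.X α))) ∧
              (∀ i, ManyIn (Vgood E G k t ∩ Wof G 𝒜₃) ((Fintype.card V : ℝ) / 10)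
                (Eligible E G k t τ₃ (B i) (Wof G 𝒜₃))) := by
  refine ⟨10 ^ 70, fun τ₁ τ₂ τ₃ k t h3 h2 h1 hk ht V _ _ E _ _ _ G hG hG' D hD hav => ?_⟩
  have hτ₂ : 2 * τ₃ + 10 ^ 64 ≤ τ₂ := by omega
  have hk' : 100 ≤ k := by omega
  have hX : ∀ α, 2 * ((τ₃ * k * t : ℕ) : ℝ) + (G.X α).card ≤ ((τ₂ * k * t : ℕ) : ℝ) := by
    intro α
    have hXα : (G.X α).card ≤ 10 ^ 64 * (k * t) := by
      refine (hG.2.1 α).2.trans (le_of_eq ?_)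
      rw [rho, sigma1]
      ring
    have h : 2 * (τ₃ * k * t) + (G.X α).card ≤ τ₂ * k * t := by
      have := Nat.mul_le_mul_right (k * t) hτ₂
      linarith
    exact_mod_cast h
  obtain ⟨B, hBD, hdis, hc, hel, hgood⟩ :=
    exists_partition_eligible hG.1 hG'.1 hk' ht (fun α => (hG.2.1 α).1) hX hD hav
  exact ⟨univ.biUnion B, B, biUnion_subset.2 fun i _ => hBD i, hdis, rfl, hc, hel, hgood⟩

end TournamentPartition
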